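/- arXiv:2307.11533 — 7 statements merged into one kernel-verified Lean document; each statement's English description precedes it below -/
import Mathlib

section
/- Let f : [0,1] → ℝ be α-Hölder continuous with α ∈ (0,1] and constant L > 0, i.e., |f(x) − f(y)| ≤ L|x − y|^α for all x, y ∈ [0,1]. Then for every n ∈ ℕ with n ≥ 1 and every x ∈ [0,1], the Bernstein polynomial satisfies |f(x) − B_n(f;x)| ≤ L · (x(1−x)/n)^{α/2}. -/
/-!
The Bernstein weights at `x` form a probability distribution on the nodes `k / n`, with mean square
distance `x (1 - x) / n` to `x`. A Hölder bound at `x` therefore controls the error by the weighted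
mean of `|x - k / n| ^ α`, and Jensen's inequality for the concave function `t ↦ t ^ (α / 2)` bounds
this mean by the power `α / 2` of the mean square distance.
-/

open scoped unitInterval

section WeightedMeans

variable {ι : Type*} {s : Finset ι} {w : ι → ℝ}

theorem sum_mul_rpow_le_rpow_sum_mul_sq {d : ι → ℝ} {α : ℝ} (hw : ∀ i ∈ s, 0 ≤ w i)
    (hw₁ : ∑ i ∈ s, w i = 1) (hd : ∀ i ∈ s, 0 ≤ d i) (hα₀ : 0 ≤ α) (hα₂ : α ≤ 2) :
    ∑ i ∈ s, w i * d i ^ α ≤ (∑ i ∈ s, w i * d i ^ 2) ^ (α / 2) := by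
  have jensen : ∑ i ∈ s, w i * (d i ^ 2) ^ (α / 2) ≤ (∑ i ∈ s, w i * d i ^ 2) ^ (α / 2) :=
    (Real.concaveOn_rpow (by linarith) (by linarith)).le_map_sum hw hw₁
      fun i _ ↦ sq_nonneg (d i)
  have rpow_eq : ∀ i ∈ s, d i ^ α = (d i ^ 2) ^ (α / 2) := fun i hi ↦ by
    rw [← Real.rpow_natCast_mul (hd i hi), Nat.cast_ofNat, mul_div_cancel₀ α two_ne_zero]
  rwa [Finset.sum_congr rfl fun i hi ↦ congrArg (w i * ·) (rpow_eq i hi)]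

variable {E : Type*} [SeminormedAddCommGroup E] [NormedSpace ℝ E]

theorem norm_sub_sum_smul_le_sum_mul_norm_sub (hw : ∀ i ∈ s, 0 ≤ w i)
    (hw₁ : ∑ i ∈ s, w i = 1) (c : E) (v : ι → E) :
    ‖c - ∑ i ∈ s, w i • v i‖ ≤ ∑ i ∈ s, w i * ‖c - v i‖ := by
  simpa only [dist_eq_norm', smul_eq_mul] using
    (convexOn_univ_dist c).map_sum_le hw hw₁ fun i _ ↦ Set.mem_univ (v i)

theorem norm_sub_sum_smul_le_of_holder {X : Type*} [PseudoMetricSpace X] {f : X → E} {x : X}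
    {p : ι → X} {L α : ℝ} (hw : ∀ i ∈ s, 0 ≤ w i) (hw₁ : ∑ i ∈ s, w i = 1) (hL : 0 ≤ L)
    (hα₀ : 0 ≤ α) (hα₂ : α ≤ 2) (hf : ∀ i ∈ s, ‖f x - f (p i)‖ ≤ L * dist x (p i) ^ α) :
    ‖f x - ∑ i ∈ s, w i • f (p i)‖ ≤ L * (∑ i ∈ s, w i * dist x (p i) ^ 2) ^ (α / 2) :=
  calc ‖f x - ∑ i ∈ s, w i • f (p i)‖
      ≤ ∑ i ∈ s, w i * ‖f x - f (p i)‖ := norm_sub_sum_smul_le_sum_mul_norm_sub hw hw₁ _ _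
    _ ≤ ∑ i ∈ s, w i * (L * dist x (p i) ^ α) :=
        Finset.sum_le_sum fun i hi ↦ mul_le_mul_of_nonneg_left (hf i hi) (hw i hi)
    _ = L * ∑ i ∈ s, w i * dist x (p i) ^ α := by
        simp only [Finset.mul_sum, mul_left_comm]
    _ ≤ L * (∑ i ∈ s, w i * dist x (p i) ^ 2) ^ (α / 2) :=
        mul_le_mul_of_nonneg_left
          (sum_mul_rpow_le_rpow_sum_mul_sq hw hw₁ (fun _ _ ↦ dist_nonneg) hα₀ hα₂) hL

end WeightedMeans

theorem sum_bernstein_mul_dist_sq {n : ℕ} (hn : n ≠ 0) (x : I) :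
    ∑ k : Fin (n + 1), bernstein n k x * dist x (bernstein.z k) ^ 2 = x * (1 - x) / n := by
  simpa only [Subtype.dist_eq, Real.dist_eq, sq_abs, mul_comm] using bernstein.variance hn x

/-- At a single point `x`, a Hölder condition of exponent `1 < α ≤ 2` does not force `f` to be
constant. -/
theorem bernstein_approx_holder_general {E : Type*} [SeminormedAddCommGroup E] [NormedSpace ℝ E]
    {f : I → E} {x : I} {L α : ℝ} (hL : 0 ≤ L) (hα₀ : 0 ≤ α) (hα₂ : α ≤ 2)
    (hf : ∀ y, ‖f x - f y‖ ≤ L * dist x y ^ α) {n : ℕ} (hn : n ≠ 0) :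
    ‖f x - ∑ k : Fin (n + 1), bernstein n k x • f (bernstein.z k)‖
      ≤ L * (x * (1 - x) / n) ^ (α / 2) := by
  rw [← sum_bernstein_mul_dist_sq hn x]
  exact norm_sub_sum_smul_le_of_holder (fun _ _ ↦ bernstein_nonneg) (bernstein.probability n x)
    hL hα₀ hα₂ fun k _ ↦ hf (bernstein.z k)

/-- Bernstein approximation error for `α`-Hölder continuous functions on `[0,1]`:
`|f(x) - B_n(f;x)| ≤ L * (x(1-x)/n)^(α/2)`. -/
theorem bernstein_approx_holder
    (f : ℝ → ℝ) (L α : ℝ) (hL : 0 < L) (hα : 0 < α) (hα1 : α ≤ 1)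
    (hf : ∀ x y : ℝ, x ∈ Set.Icc (0:ℝ) 1 → y ∈ Set.Icc (0:ℝ) 1 →
      |f x - f y| ≤ L * |x - y| ^ α)
    (n : ℕ) (hn : 1 ≤ n) (x : ℝ) (hx : x ∈ Set.Icc (0:ℝ) 1) :
    |f x - ∑ k ∈ Finset.range (n + 1),
        f ((k : ℝ) / n) * ((n.choose k : ℝ) * x ^ k * (1 - x) ^ (n - k))|
      ≤ L * (x * (1 - x) / n) ^ (α / 2) := by
  simpa [Finset.sum_range, bernstein_apply, bernstein.z, mul_comm] using
    bernstein_approx_holder_general (f := fun y : I ↦ f y) (x := ⟨x, hx⟩) hL.le hα.le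
      (by linarith) (fun y ↦ hf x y hx y.2) (Nat.one_le_iff_ne_zero.mp hn)
end

section
/- Let n ≥ 1 be a natural number, x ∈ (0,∞), and let p : ℕ → [0,∞) be a probability mass function on ℕ (∑_{k=0}^∞ p(k) = 1) of a random variable K with E[K] = ∑_{k=0}^∞ k·p(k) = n·x and finite variance Var[K] = ∑_{k=0}^∞ (k − nx)²·p(k) < ∞. If f : [0,∞) → ℝ satisfies the general Hölder-type condition |f(x) − f(y)| ≤ L|x − y|^α/(γ + x + y)^β for all x, y ∈ [0,∞), with constants L > 0, α ∈ (0,1], β, γ ∈ [0,∞), then the approximation scheme S_n(f;x) := ∑_{k=0}^∞ f(k/n) p(k) satisfies |f(x) − S_n(f;x)| ≤ (L/n^α) · (Var[K])^{α/2}/(γ + x)^β. -/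
/-!
Since `p` has mass one, `f x - S_n(f;x)` is the `p`-average of `f x - f (k / n)`. Discarding the
nonnegative node `k / n` from the denominator of the Hölder condition at `x` and `k / n` bounds each
increment by `L / n ^ α / (γ + x) ^ β * |k - n x| ^ α`, and Jensen's inequality for the concave
function `t ↦ t ^ (α / 2)` bounds the average of `|k - n x| ^ α` by `Var[K] ^ (α / 2)`.
-/

section WeightedAverage

variable {ι : Type*} {w : ι → ℝ}

theorem sum_mul_rpow_le_rpow_sum_mul {F : Finset ι} (hw : ∀ i, 0 ≤ w i) (hw1 : ∑ i ∈ F, w i ≤ 1)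
    {t : ι → ℝ} (ht : ∀ i, 0 ≤ t i) {s : ℝ} (hs0 : 0 ≤ s) (hs1 : s ≤ 1) :
    ∑ i ∈ F, w i * t i ^ s ≤ (∑ i ∈ F, w i * t i) ^ s := by
  obtain rfl | hs : 0 = s ∨ 0 < s := hs0.eq_or_lt
  · simpa using hw1
  have hinv : ∀ i, (t i ^ s) ^ s⁻¹ = t i := fun i => Real.rpow_rpow_inv (ht i) hs.ne'
  have hmass : (∑ i ∈ F, w i) ^ (1 - s) ≤ 1 :=
    Real.rpow_le_one (Finset.sum_nonneg fun i _ => hw i) hw1 (sub_nonneg.2 hs1)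
  calc ∑ i ∈ F, w i * t i ^ s
      ≤ (∑ i ∈ F, w i) ^ (1 - s) * (∑ i ∈ F, w i * t i) ^ s := by
        simpa only [hinv, inv_inv] using Real.inner_le_weight_mul_Lp_of_nonneg F
          ((one_le_inv₀ hs).2 hs1) w (fun i => t i ^ s) hw fun i => Real.rpow_nonneg (ht i) s
    _ ≤ (∑ i ∈ F, w i * t i) ^ s :=
        mul_le_of_le_one_left
          (Real.rpow_nonneg (Finset.sum_nonneg fun i _ => mul_nonneg (hw i) (ht i)) s) hmass

theorem summable_and_tsum_mul_rpow_le_rpow_tsum_mul (hw : ∀ i, 0 ≤ w i) (hw1 : HasSum w 1)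
    {t : ι → ℝ} (ht : ∀ i, 0 ≤ t i) (hwt : Summable fun i => w i * t i)
    {s : ℝ} (hs0 : 0 ≤ s) (hs1 : s ≤ 1) :
    (Summable fun i => w i * t i ^ s) ∧ ∑' i, w i * t i ^ s ≤ (∑' i, w i * t i) ^ s := by
  have hwt0 : ∀ i, 0 ≤ w i * t i := fun i => mul_nonneg (hw i) (ht i)
  have hterm : ∀ i, 0 ≤ w i * t i ^ s := fun i => mul_nonneg (hw i) (Real.rpow_nonneg (ht i) s)
  have hpartial : ∀ F : Finset ι, ∑ i ∈ F, w i * t i ^ s ≤ (∑' i, w i * t i) ^ s := fun F =>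
    calc ∑ i ∈ F, w i * t i ^ s
        ≤ (∑ i ∈ F, w i * t i) ^ s :=
          sum_mul_rpow_le_rpow_sum_mul hw (sum_le_hasSum F (fun i _ => hw i) hw1) ht hs0 hs1
      _ ≤ (∑' i, w i * t i) ^ s :=
          Real.rpow_le_rpow (Finset.sum_nonneg fun i _ => hwt0 i)
            (hwt.sum_le_tsum F fun i _ => hwt0 i) hs0
  exact ⟨summable_of_sum_le hterm hpartial, Real.tsum_le_of_sum_le hterm hpartial⟩

theorem summable_and_tsum_mul_abs_rpow_le_rpow_tsum_mul_sq (hw : ∀ i, 0 ≤ w i) (hw1 : HasSum w 1)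
    {d : ι → ℝ} (hd : Summable fun i => w i * d i ^ 2) {α : ℝ} (hα0 : 0 ≤ α) (hα2 : α ≤ 2) :
    (Summable fun i => w i * |d i| ^ α) ∧
      ∑' i, w i * |d i| ^ α ≤ (∑' i, w i * d i ^ 2) ^ (α / 2) := by
  have habs : ∀ i, (d i ^ 2) ^ (α / 2) = |d i| ^ α := fun i => by
    rw [Real.rpow_div_two_eq_sqrt α (sq_nonneg (d i)), Real.sqrt_sq_eq_abs]
  simpa only [habs] using summable_and_tsum_mul_rpow_le_rpow_tsum_mul hw hw1
    (fun i => sq_nonneg (d i)) hd (s := α / 2) (by linarith) (by linarith)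

theorem norm_sub_tsum_smul_le_tsum_mul {E : Type*} [NormedAddCommGroup E] [NormedSpace ℝ E]
    [CompleteSpace E] (hw : ∀ i, 0 ≤ w i) (hw1 : HasSum w 1) {c : E} {g : ι → E} {b : ι → ℝ}
    (hb : Summable fun i => w i * b i) (hgb : ∀ i, ‖c - g i‖ ≤ b i) :
    ‖c - ∑' i, w i • g i‖ ≤ ∑' i, w i * b i := by
  have hterm : ∀ i, ‖w i • (c - g i)‖ ≤ w i * b i := fun i => by
    rw [norm_smul, Real.norm_of_nonneg (hw i)]
    exact mul_le_mul_of_nonneg_left (hgb i) (hw i)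
  have hc : HasSum (fun i => w i • c) c := by simpa only [one_smul] using hw1.smul_const c
  have hdiff : Summable fun i => w i • (c - g i) := .of_norm_bounded hb hterm
  have hg : HasSum (fun i => w i • g i) (c - ∑' i, w i • (c - g i)) := by
    simpa only [smul_sub, sub_sub_cancel] using hc.sub hdiff.hasSum
  rw [hg.tsum_eq, sub_sub_cancel]
  exact tsum_of_norm_bounded hb.hasSum hterm

end WeightedAverage

section GeneralHolder

variable {E : Type*} [NormedAddCommGroup E] {f : ℝ → E} {L α β γ a x u : ℝ}

/-- The general Hölder-type condition on `[0, ∞)`, under which the approximation scheme is studied.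
As in the paper, only nonnegative points are compared; `f` is total, with arbitrary values on the
negative axis. -/
def GeneralHolderWith (L α β γ : ℝ) (f : ℝ → E) : Prop :=
  ∀ y z : ℝ, 0 ≤ y → 0 ≤ z → ‖f y - f z‖ ≤ L * |y - z| ^ α / (γ + y + z) ^ β

namespace GeneralHolderWith

theorem norm_sub_le_div_rpow_add (hf : GeneralHolderWith L α β γ f) (hL : 0 ≤ L) (hβ : 0 ≤ β)
    (hx : 0 ≤ x) (hγx : 0 < γ + x) (hu : 0 ≤ u) :
    ‖f x - f u‖ ≤ L * |x - u| ^ α / (γ + x) ^ β :=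
  calc ‖f x - f u‖
      ≤ L * |x - u| ^ α / (γ + x + u) ^ β := hf x u hx hu
    _ ≤ L * |x - u| ^ α / (γ + x) ^ β := by
        gcongr _ / ?_ ^ β
        exact le_add_of_nonneg_right hu

theorem norm_sub_apply_div_le (hf : GeneralHolderWith L α β γ f) (hL : 0 ≤ L) (hβ : 0 ≤ β)
    (hx : 0 ≤ x) (hγx : 0 < γ + x) (ha : 0 < a) (hu : 0 ≤ u) :
    ‖f x - f (u / a)‖ ≤ L / a ^ α / (γ + x) ^ β * |u - a * x| ^ α := by
  have hdist : |x - u / a| = |u - a * x| / a := by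
    rw [abs_sub_comm, div_sub' ha.ne', abs_div, abs_of_pos ha]
  calc ‖f x - f (u / a)‖
      ≤ L * |x - u / a| ^ α / (γ + x) ^ β :=
        hf.norm_sub_le_div_rpow_add hL hβ hx hγx (div_nonneg hu ha.le)
    _ = L / a ^ α / (γ + x) ^ β * |u - a * x| ^ α := by
        rw [hdist, Real.div_rpow (abs_nonneg _) ha.le]
        ring

end GeneralHolderWith

end GeneralHolder

theorem approx_scheme_general_holder_general {ι E : Type*} [NormedAddCommGroup E]
    [NormedSpace ℝ E] [CompleteSpace E] {w u : ι → ℝ} (hw : ∀ i, 0 ≤ w i) (hw1 : ∑' i, w i = 1)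
    (hu : ∀ i, 0 ≤ u i) {a x : ℝ} (ha : 0 < a) (hx : 0 ≤ x)
    (hV : Summable fun i => w i * (u i - a * x) ^ 2)
    {f : ℝ → E} {L α β γ : ℝ} (hf : GeneralHolderWith L α β γ f) (hL : 0 ≤ L) (hα : 0 ≤ α)
    (hα2 : α ≤ 2) (hβ : 0 ≤ β) (hγ : 0 ≤ γ) (hγx : γ + x ≠ 0) :
    ‖f x - ∑' i, w i • f (u i / a)‖
      ≤ L / a ^ α * (∑' i, w i * (u i - a * x) ^ 2) ^ (α / 2) / (γ + x) ^ β := by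
  have hγx_pos : 0 < γ + x := (add_nonneg hγ hx).lt_of_ne' hγx
  have hw_summable : Summable w :=
    not_imp_comm.1 tsum_eq_zero_of_not_summable (hw1.trans_ne one_ne_zero)
  have hmass : HasSum w 1 := hw1 ▸ hw_summable.hasSum
  obtain ⟨hmom, hmom_le⟩ :=
    summable_and_tsum_mul_abs_rpow_le_rpow_tsum_mul_sq hw hmass hV hα hα2
  set C : ℝ := L / a ^ α / (γ + x) ^ β with hC
  have hsummable : Summable fun i => w i * (C * |u i - a * x| ^ α) := by
    simpa only [mul_left_comm] using hmom.mul_left C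
  calc ‖f x - ∑' i, w i • f (u i / a)‖
      ≤ ∑' i, w i * (C * |u i - a * x| ^ α) :=
        norm_sub_tsum_smul_le_tsum_mul hw hmass hsummable fun i =>
          hf.norm_sub_apply_div_le hL hβ hx hγx_pos ha (hu i)
    _ = C * ∑' i, w i * |u i - a * x| ^ α := by simp only [mul_left_comm _ C, tsum_mul_left]
    _ ≤ C * (∑' i, w i * (u i - a * x) ^ 2) ^ (α / 2) := by gcongr
    _ = L / a ^ α * (∑' i, w i * (u i - a * x) ^ 2) ^ (α / 2) / (γ + x) ^ β := by
        rw [hC]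
        ring

/-- Error bound for the general approximation scheme `S_n(f;x) = ∑_{k} f(k/n) p(k)` built from a
probability mass function `p` on `ℕ` with mean `n·x` and finite variance, for a function `f`
satisfying the general Hölder-type condition:
`|f(x) - S_n(f;x)| ≤ (L / n^α) · Var[K]^(α/2) / (γ + x)^β`. -/
theorem approx_scheme_general_holder
    (n : ℕ) (hn : 1 ≤ n) (x : ℝ) (hx : 0 < x)
    (p : ℕ → ℝ) (hp : ∀ k, 0 ≤ p k) (hp1 : ∑' k, p k = 1)
    (hmean : ∑' (k : ℕ), (k : ℝ) * p k = n * x)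
    (hVsum : Summable fun k : ℕ => ((k : ℝ) - n * x) ^ 2 * p k)
    (f : ℝ → ℝ) (L α β γ : ℝ) (hL : 0 < L) (hα : 0 < α) (hα1 : α ≤ 1)
    (hβ : 0 ≤ β) (hγ : 0 ≤ γ)
    (hf : ∀ y z : ℝ, 0 ≤ y → 0 ≤ z →
      |f y - f z| ≤ L * |y - z| ^ α / (γ + y + z) ^ β) :
    |f x - ∑' (k : ℕ), f ((k : ℝ) / n) * p k|
      ≤ L / (n : ℝ) ^ α * (∑' (k : ℕ), ((k : ℝ) - n * x) ^ 2 * p k) ^ (α / 2) / (γ + x) ^ β := by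
  simp only [mul_comm _ (p _)] at hVsum ⊢
  exact approx_scheme_general_holder_general hp hp1 (fun k => k.cast_nonneg) (by positivity) hx.le
    hVsum (show GeneralHolderWith L α β γ f from hf) hL.le hα.le (by linarith) hβ hγ (by positivity)
end

section
/- Let n ≥ 1 be a natural number, x ∈ (0,∞), and let p : ℕ → [0,∞) be a probability mass function on ℕ of a random variable K with mean n·x and finite variance Var[K]. If f : [0,∞) → ℝ satisfies |f(x) − f(y)| ≤ L|x − y|^α for all x, y ∈ [0,∞) with L > 0 and α ∈ (0,1], then |f(x) − S_n(f;x)| ≤ (L/n^α)·(Var[K])^{α/2}, where S_n(f;x) := ∑_{k=0}^∞ f(k/n) p(k). -/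
/-!
Since the weights sum to one, the error `b - ∑ wᵢ aᵢ` equals `∑ wᵢ (b - aᵢ)`, and the Hölder
condition bounds it by `L` times the absolute moment of order `α` of the displacements. By
Lyapunov's inequality, that moment is at most the `α / q`-th power of the moment of order `q`;
the variance is the case `q = 2`.
-/

section Lyapunov

variable {ι : Type*} {w z : ι → ℝ} {r q : ℝ}

theorem lyapunov_sum_rpow_mul_le (s : Finset ι) (hw : ∀ i, 0 ≤ w i) (hz : ∀ i, 0 ≤ z i)
    (hr : 0 < r) (hrq : r ≤ q) :
    ∑ i ∈ s, z i ^ r * w i ≤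
      (∑ i ∈ s, w i) ^ (1 - r / q) * (∑ i ∈ s, z i ^ q * w i) ^ (r / q) := by
  have hpow (i : ι) : (z i ^ r) ^ (q / r) = z i ^ q := by
    rw [← Real.rpow_mul (hz i), mul_div_cancel₀ q hr.ne']
  simpa only [hpow, inv_div, mul_comm (w _)] using
    Real.inner_le_weight_mul_Lp_of_nonneg s ((one_le_div hr).2 hrq) w (fun i => z i ^ r) hw
      fun i => Real.rpow_nonneg (hz i) r

theorem lyapunov_sum_rpow_mul_le_tsum (s : Finset ι) (hw : ∀ i, 0 ≤ w i) (hz : ∀ i, 0 ≤ z i)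
    (hwsum : Summable w) (hzsum : Summable fun i => z i ^ q * w i) (hr : 0 < r) (hrq : r ≤ q) :
    ∑ i ∈ s, z i ^ r * w i ≤
      (∑' i, w i) ^ (1 - r / q) * (∑' i, z i ^ q * w i) ^ (r / q) := by
  have hzw (i : ι) : 0 ≤ z i ^ q * w i := mul_nonneg (Real.rpow_nonneg (hz i) q) (hw i)
  have hq : 0 < q := hr.trans_le hrq
  have hexp : 0 ≤ 1 - r / q := sub_nonneg.2 ((div_le_one hq).2 hrq)
  have hwle : ∑ i ∈ s, w i ≤ ∑' i, w i := hwsum.sum_le_tsum s fun i _ => hw i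
  have hzwle : ∑ i ∈ s, z i ^ q * w i ≤ ∑' i, z i ^ q * w i :=
    hzsum.sum_le_tsum s fun i _ => hzw i
  have hwnonneg : 0 ≤ ∑ i ∈ s, w i := Finset.sum_nonneg fun i _ => hw i
  have hzwnonneg : 0 ≤ ∑ i ∈ s, z i ^ q * w i := Finset.sum_nonneg fun i _ => hzw i
  refine (lyapunov_sum_rpow_mul_le s hw hz hr hrq).trans ?_
  gcongr
  exact Real.rpow_nonneg (tsum_nonneg hw) _

theorem summable_rpow_mul_of_le (hw : ∀ i, 0 ≤ w i) (hz : ∀ i, 0 ≤ z i) (hwsum : Summable w)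
    (hzsum : Summable fun i => z i ^ q * w i) (hr : 0 < r) (hrq : r ≤ q) :
    Summable fun i => z i ^ r * w i :=
  summable_of_sum_le (fun i => mul_nonneg (Real.rpow_nonneg (hz i) r) (hw i)) fun s =>
    lyapunov_sum_rpow_mul_le_tsum s hw hz hwsum hzsum hr hrq

theorem lyapunov_tsum_rpow_mul_le (hw : ∀ i, 0 ≤ w i) (hz : ∀ i, 0 ≤ z i)
    (hwsum : Summable w) (hzsum : Summable fun i => z i ^ q * w i) (hr : 0 < r) (hrq : r ≤ q) :
    ∑' i, z i ^ r * w i ≤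
      (∑' i, w i) ^ (1 - r / q) * (∑' i, z i ^ q * w i) ^ (r / q) :=
  (summable_rpow_mul_of_le hw hz hwsum hzsum hr hrq).tsum_le_of_sum_le fun s =>
    lyapunov_sum_rpow_mul_le_tsum s hw hz hwsum hzsum hr hrq

end Lyapunov

section WeightedMean

variable {ι E : Type*} [NormedAddCommGroup E] [NormedSpace ℝ E] [CompleteSpace E]
  {w : ι → ℝ} {a : ι → E} {b : E}

theorem norm_sub_tsum_smul_le_of_norm_sub_le {d : ι → ℝ} (hw : ∀ i, 0 ≤ w i) (hw1 : HasSum w 1)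
    (hab : ∀ i, ‖b - a i‖ ≤ d i) (hd : Summable fun i => d i * w i) :
    ‖b - ∑' i, w i • a i‖ ≤ ∑' i, d i * w i := by
  have hbound (i : ι) : ‖w i • (b - a i)‖ ≤ d i * w i := by
    rw [norm_smul, Real.norm_of_nonneg (hw i), mul_comm]
    exact mul_le_mul_of_nonneg_right (hab i) (hw i)
  have hb : HasSum (fun i => w i • b) b := by
    simpa only [one_smul] using hw1.smul_const b
  have hsub : Summable fun i => w i • (b - a i) := hd.of_norm_bounded hbound
  have herror : b - ∑' i, w i • a i = ∑' i, w i • (b - a i) := by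
    have h := (hb.sub hsub.hasSum).tsum_eq
    simp only [smul_sub, sub_sub_cancel] at h ⊢
    rw [h, sub_sub_cancel]
  rw [herror]
  exact tsum_of_norm_bounded hd.hasSum hbound

theorem norm_sub_tsum_smul_le_mul_tsum_rpow {d : ι → ℝ} {L α q : ℝ} (hw : ∀ i, 0 ≤ w i)
    (hw1 : HasSum w 1) (hd : ∀ i, 0 ≤ d i) (hdsum : Summable fun i => d i ^ q * w i)
    (hL : 0 ≤ L) (hα : 0 < α) (hαq : α ≤ q) (hab : ∀ i, ‖b - a i‖ ≤ L * d i ^ α) :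
    ‖b - ∑' i, w i • a i‖ ≤ L * (∑' i, d i ^ q * w i) ^ (α / q) := by
  have hmoment : ∑' i, d i ^ α * w i ≤ (∑' i, d i ^ q * w i) ^ (α / q) := by
    simpa only [hw1.tsum_eq, Real.one_rpow, one_mul] using
      lyapunov_tsum_rpow_mul_le hw hd hw1.summable hdsum hα hαq
  have hαsum : Summable fun i => L * d i ^ α * w i := by
    simpa only [mul_assoc] using
      (summable_rpow_mul_of_le hw hd hw1.summable hdsum hα hαq).mul_left L
  calc ‖b - ∑' i, w i • a i‖
      ≤ ∑' i, L * d i ^ α * w i := norm_sub_tsum_smul_le_of_norm_sub_le hw hw1 hab hαsum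
    _ = L * ∑' i, d i ^ α * w i := by simp only [mul_assoc, tsum_mul_left]
    _ ≤ L * (∑' i, d i ^ q * w i) ^ (α / q) := by gcongr

end WeightedMean

theorem approx_scheme_plain_holder_general {ι V E : Type*} [NormedAddCommGroup V]
    [NormedSpace ℝ V] [NormedAddCommGroup E] [NormedSpace ℝ E] [CompleteSpace E]
    {c : ℝ} (hc : 0 < c) {x : V} {u : ι → V} {w : ι → ℝ} (hw : ∀ i, 0 ≤ w i)
    (hw1 : ∑' i, w i = 1) {q : ℝ} (hsum : Summable fun i => ‖u i - c • x‖ ^ q * w i)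
    {f : V → E} {L α : ℝ} (hL : 0 ≤ L) (hα : 0 < α) (hαq : α ≤ q)
    (hf : ∀ i, ‖f x - f (c⁻¹ • u i)‖ ≤ L * ‖x - c⁻¹ • u i‖ ^ α) :
    ‖f x - ∑' i, w i • f (c⁻¹ • u i)‖ ≤
      L / c ^ α * (∑' i, ‖u i - c • x‖ ^ q * w i) ^ (α / q) := by
  have hw_summable : Summable w := by
    by_contra h
    exact one_ne_zero (hw1.symm.trans (tsum_eq_zero_of_not_summable h))
  have hnorm (i : ι) : ‖x - c⁻¹ • u i‖ = ‖u i - c • x‖ / c := by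
    rw [norm_sub_rev, eq_div_iff hc.ne', mul_comm, ← norm_smul_of_nonneg hc.le, smul_sub,
      smul_inv_smul₀ hc.ne']
  refine norm_sub_tsum_smul_le_mul_tsum_rpow hw (hw1 ▸ hw_summable.hasSum)
    (fun i => norm_nonneg (u i - c • x)) hsum (by positivity) hα hαq fun i => (hf i).trans_eq ?_
  rw [hnorm, Real.div_rpow (norm_nonneg _) hc.le, mul_div_assoc', div_mul_eq_mul_div]

/-- Error bound for the general approximation scheme `S_n(f;x) = ∑_{k} f(k/n) p(k)` built from a
probability mass function `p` on `ℕ` with mean `n·x` and finite variance, for a function `f`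
satisfying the plain Hölder condition:
`|f(x) - S_n(f;x)| ≤ (L / n^α) · Var[K]^(α/2)`. -/
theorem approx_scheme_plain_holder
    (n : ℕ) (hn : 1 ≤ n) (x : ℝ) (hx : 0 < x)
    (p : ℕ → ℝ) (hp : ∀ k, 0 ≤ p k) (hp1 : ∑' k, p k = 1)
    (hmean : ∑' (k : ℕ), (k : ℝ) * p k = n * x)
    (hVsum : Summable fun k : ℕ => ((k : ℝ) - n * x) ^ 2 * p k)
    (f : ℝ → ℝ) (L α : ℝ) (hL : 0 < L) (hα : 0 < α) (hα1 : α ≤ 1)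
    (hf : ∀ y z : ℝ, 0 ≤ y → 0 ≤ z → |f y - f z| ≤ L * |y - z| ^ α) :
    |f x - ∑' (k : ℕ), f ((k : ℝ) / n) * p k|
      ≤ L / (n : ℝ) ^ α * (∑' (k : ℕ), ((k : ℝ) - n * x) ^ 2 * p k) ^ (α / 2) := by
  simpa [div_eq_inv_mul, mul_comm] using
    approx_scheme_plain_holder_general (c := n) (x := x) (u := fun k : ℕ => (k : ℝ)) (q := 2)
      (f := f) (by positivity) hp hp1 (by simpa using hVsum) hL.le hα (by linarith)
      fun k => by simpa using hf x ((n : ℝ)⁻¹ * k) hx.le (by positivity)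
end

section
/- Let f : [0,∞) → ℝ satisfy the general Hölder-type condition |f(x) − f(y)| ≤ L|x − y|^α/(γ + x + y)^β for all x, y ∈ [0,∞), with L > 0, α ∈ (0,1], β, γ ∈ [0,∞). Then for all n ≥ 1 and all x ∈ (0,∞), the Szász-Mirakjan operator satisfies |f(x) − S_n(f;x)| ≤ (L/n^{α/2}) · x^{α/2}/(γ + x)^β. -/
/-!
If `N` is Poisson with parameter `n x`, then `X = N / n` has mean `x` and variance `x / n`, and
`S_n(f; x)` is the expectation of `f(X)`. Since `γ + x + X ≥ γ + x`, the Hölder condition at the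
point `x` gives `|f(x) - f(X)| ≤ L |X - x| ^ α / (γ + x) ^ β`, and by Jensen's inequality for the
concave function `u ↦ u ^ (α / 2)` the expectation of `|X - x| ^ α` is at most `(x / n) ^ (α / 2)`.
-/

open MeasureTheory ProbabilityTheory
open scoped NNReal Nat

section Moments

variable {Ω E F : Type*} {mΩ : MeasurableSpace Ω} {μ : Measure Ω} [NormedAddCommGroup E]
  [NormedAddCommGroup F]

lemma integrable_norm_rpow_of_memLp [IsFiniteMeasure μ] {Y : Ω → E} {p q : ℝ}
    (hY : MemLp Y (ENNReal.ofReal q) μ) (hp : 0 ≤ p) (hpq : p ≤ q) :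
    Integrable (fun ω ↦ ‖Y ω‖ ^ p) μ := by
  simpa only [ENNReal.toReal_ofReal hp] using
    (hY.mono_exponent (ENNReal.ofReal_le_ofReal hpq)).integrable_norm_rpow'

lemma integral_norm_rpow_le_rpow_integral_norm_rpow [IsProbabilityMeasure μ] {Y : Ω → E} {p q : ℝ}
    (hY : MemLp Y (ENNReal.ofReal q) μ) (hp : 0 ≤ p) (hpq : p ≤ q) :
    ∫ ω, ‖Y ω‖ ^ p ∂μ ≤ (∫ ω, ‖Y ω‖ ^ q ∂μ) ^ (p / q) := by
  have hq : 0 ≤ q := hp.trans hpq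
  have hpow (ω : Ω) : (‖Y ω‖ ^ q) ^ (p / q) = ‖Y ω‖ ^ p := by
    rw [← Real.rpow_mul (norm_nonneg _), mul_div_cancel_of_imp' fun h ↦ le_antisymm (h ▸ hpq) hp]
  simp only [← hpow]
  refine (Real.concaveOn_rpow (by positivity) (div_le_one_of_le₀ hpq hq)).le_map_integral
    (Real.continuous_rpow_const (by positivity)).continuousOn isClosed_Ici
    (ae_of_all μ fun ω ↦ Real.rpow_nonneg (norm_nonneg (Y ω)) q)
    (integrable_norm_rpow_of_memLp hY hq le_rfl) ?_
  simpa only [Function.comp_def, hpow] using integrable_norm_rpow_of_memLp hY hp hpq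

lemma integrable_of_norm_sub_le_mul_rpow [IsFiniteMeasure μ] {X : Ω → F} {Y : Ω → E} {c : E}
    {C p q : ℝ} (hX : MemLp X (ENNReal.ofReal q) μ) (hp : 0 ≤ p) (hpq : p ≤ q)
    (hY : AEStronglyMeasurable Y μ) (hYX : ∀ᵐ ω ∂μ, ‖Y ω - c‖ ≤ C * ‖X ω‖ ^ p) :
    Integrable Y μ := by
  have hdiff : Integrable (fun ω ↦ Y ω - c) μ :=
    ((integrable_norm_rpow_of_memLp hX hp hpq).const_mul C).mono'
      (hY.sub aestronglyMeasurable_const) hYX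
  simpa only [Pi.add_def, sub_add_cancel] using hdiff.add (integrable_const c)

lemma norm_integral_sub_le_mul_rpow [IsProbabilityMeasure μ] [NormedSpace ℝ E] [CompleteSpace E]
    {X : Ω → F} {Y : Ω → E} {c : E} {C p q : ℝ} (hX : MemLp X (ENNReal.ofReal q) μ) (hC : 0 ≤ C)
    (hp : 0 ≤ p) (hpq : p ≤ q) (hY : AEStronglyMeasurable Y μ)
    (hYX : ∀ᵐ ω ∂μ, ‖Y ω - c‖ ≤ C * ‖X ω‖ ^ p) :
    ‖∫ ω, Y ω ∂μ - c‖ ≤ C * (∫ ω, ‖X ω‖ ^ q ∂μ) ^ (p / q) := by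
  have hYint := integrable_of_norm_sub_le_mul_rpow hX hp hpq hY hYX
  calc ‖∫ ω, Y ω ∂μ - c‖
      = ‖∫ ω, (Y ω - c) ∂μ‖ := by
        rw [integral_sub hYint (integrable_const c), integral_const, probReal_univ, one_smul]
    _ ≤ ∫ ω, C * ‖X ω‖ ^ p ∂μ :=
        norm_integral_le_of_norm_le ((integrable_norm_rpow_of_memLp hX hp hpq).const_mul C) hYX
    _ = C * ∫ ω, ‖X ω‖ ^ p ∂μ := integral_const_mul C _
    _ ≤ C * (∫ ω, ‖X ω‖ ^ q ∂μ) ^ (p / q) := by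
        gcongr
        exact integral_norm_rpow_le_rpow_integral_norm_rpow hX hp hpq

end Moments

section Poisson

variable {E : Type*} [NormedAddCommGroup E] [NormedSpace ℝ E] {g : ℕ → E} {r : ℝ≥0}

lemma poisson_weight_succ_mul (r : ℝ) (k : ℕ) :
    Real.exp (-r) * r ^ (k + 1) / (k + 1)! * (k + 1 : ℕ) = r * (Real.exp (-r) * r ^ k / k !) := by
  rw [Nat.factorial_succ]
  push_cast
  field_simp
  ring

lemma integrable_natCast_smul_pred_poissonMeasure (hg : Integrable g Po(r)) :
    Integrable (fun k : ℕ ↦ (k : ℝ) • g (k - 1)) Po(r) := by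
  rw [integrable_poissonMeasure_iff] at hg ⊢
  rw [← summable_nat_add_iff 1]
  refine (hg.mul_left (r : ℝ)).congr fun k ↦ ?_
  rw [norm_smul, Real.norm_natCast, Nat.add_sub_cancel, ← mul_assoc, ← mul_assoc,
    poisson_weight_succ_mul]

/-- The **Chen–Stein identity**; at `k = 0`, where `k - 1` truncates, the factor `k` vanishes. -/
lemma integral_natCast_smul_pred_poissonMeasure [CompleteSpace E] (hg : Integrable g Po(r)) :
    ∫ k, (k : ℝ) • g (k - 1) ∂Po(r) = (r : ℝ) • ∫ k, g k ∂Po(r) := by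
  have hleft := hasSum_integral_poissonMeasure (integrable_natCast_smul_pred_poissonMeasure hg)
  have hright := (hasSum_integral_poissonMeasure hg).const_smul (r : ℝ)
  rw [← hasSum_nat_add_iff' 1] at hleft
  simp only [smul_smul, Nat.add_sub_cancel, poisson_weight_succ_mul] at hleft hright
  simpa using hleft.unique hright

lemma integrable_natCast_poissonMeasure (r : ℝ≥0) : Integrable (fun k : ℕ ↦ (k : ℝ)) Po(r) := by
  simpa using integrable_natCast_smul_pred_poissonMeasure (integrable_const (1 : ℝ))

lemma integral_natCast_poissonMeasure (r : ℝ≥0) : ∫ k, (k : ℝ) ∂Po(r) = r := by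
  simpa using integral_natCast_smul_pred_poissonMeasure (r := r) (integrable_const (1 : ℝ))

lemma natCast_mul_pred_add_one (k : ℕ) : (k : ℝ) * ((k - 1 : ℕ) + 1) = (k : ℝ) ^ 2 := by
  cases k <;> simp [sq]

lemma memLp_two_natCast_poissonMeasure (r : ℝ≥0) : MemLp (fun k : ℕ ↦ (k : ℝ)) 2 Po(r) := by
  rw [memLp_two_iff_integrable_sq .of_discrete]
  simpa only [Pi.add_apply, smul_eq_mul, natCast_mul_pred_add_one] using
    integrable_natCast_smul_pred_poissonMeasure
      ((integrable_natCast_poissonMeasure r).add (integrable_const 1))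

lemma integral_natCast_sq_poissonMeasure (r : ℝ≥0) :
    ∫ k, (k : ℝ) ^ 2 ∂Po(r) = r * (r + 1) := by
  have hstein := integral_natCast_smul_pred_poissonMeasure
    ((integrable_natCast_poissonMeasure r).add (integrable_const 1))
  simpa only [Pi.add_apply, smul_eq_mul, natCast_mul_pred_add_one,
    integral_add (integrable_natCast_poissonMeasure r) (integrable_const 1),
    integral_natCast_poissonMeasure, integral_const, probReal_univ, one_mul] using hstein

lemma variance_natCast_poissonMeasure (r : ℝ≥0) : Var[fun k : ℕ ↦ (k : ℝ); Po(r)] = r := by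
  rw [variance_eq_sub (memLp_two_natCast_poissonMeasure r), integral_natCast_poissonMeasure]
  simp only [Pi.pow_apply, integral_natCast_sq_poissonMeasure]
  ring

lemma memLp_two_natCast_div_sub_poissonMeasure (r : ℝ≥0) (t x : ℝ) :
    MemLp (fun k : ℕ ↦ (k : ℝ) / t - x) 2 Po(r) := by
  simp only [div_eq_mul_inv]
  exact ((memLp_two_natCast_poissonMeasure r).mul_const t⁻¹).sub (memLp_const x)

lemma integral_natCast_div_sub_sq_poissonMeasure {t : ℝ≥0} (ht : t ≠ 0) (x : ℝ≥0) :
    ∫ k, ((k : ℝ) / t - x) ^ 2 ∂Po(t * x) = x / t := by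
  have ht' : (t : ℝ) ≠ 0 := NNReal.coe_ne_zero.2 ht
  calc ∫ k, ((k : ℝ) / t - x) ^ 2 ∂Po(t * x)
      = ∫ k, ((k : ℝ) - t * x) ^ 2 / t ^ 2 ∂Po(t * x) := by
        congr! 2 with k
        field_simp
    _ = Var[fun k : ℕ ↦ (k : ℝ); Po(t * x)] / t ^ 2 := by
        rw [integral_div, variance_eq_integral .of_discrete, integral_natCast_poissonMeasure,
          NNReal.coe_mul]
    _ = x / t := by
        rw [variance_natCast_poissonMeasure, NNReal.coe_mul]
        field_simp

end Poisson

theorem szasz_mirakjan_general_holder_general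
    {f : ℝ → ℝ} {L α β γ t x : ℝ} (hL : 0 ≤ L) (hα : 0 ≤ α) (hα2 : α ≤ 2) (hβ : 0 ≤ β)
    (ht : 0 < t) (hx : 0 ≤ x) (hγx : 0 < γ + x)
    (hf : ∀ y : ℝ, 0 ≤ y → |f x - f y| ≤ L * |x - y| ^ α / (γ + x + y) ^ β) :
    ∃ S, HasSum
        (fun k : ℕ ↦ f ((k : ℝ) / t) * (Real.exp (-(t * x)) * (t * x) ^ k / k.factorial)) S ∧
      |f x - S| ≤ L / t ^ (α / 2) * x ^ (α / 2) / (γ + x) ^ β := by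
  lift t to ℝ≥0 using ht.le
  lift x to ℝ≥0 using hx
  have hX : MemLp (fun k : ℕ ↦ (k : ℝ) / t - x) (ENNReal.ofReal 2) Po(t * x) := by
    simpa only [ENNReal.ofReal_ofNat] using memLp_two_natCast_div_sub_poissonMeasure (t * x) t x
  have hholder (k : ℕ) :
      ‖f ((k : ℝ) / t) - f x‖ ≤ L / (γ + x) ^ β * ‖(k : ℝ) / t - x‖ ^ α := by
    have hk : 0 ≤ (k : ℝ) / t := by positivity
    rw [norm_sub_rev, norm_sub_rev _ (x : ℝ), div_mul_eq_mul_div]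
    refine (hf _ hk).trans ?_
    rw [Real.norm_eq_abs]
    gcongr L * _ / ?_ ^ β
    exact le_add_of_nonneg_right hk
  have hint : Integrable (fun k : ℕ ↦ f ((k : ℝ) / t)) Po(t * x) :=
    integrable_of_norm_sub_le_mul_rpow hX hα hα2 .of_discrete (ae_of_all _ hholder)
  refine ⟨_, by simpa [mul_comm] using hasSum_integral_poissonMeasure hint, ?_⟩
  calc |f x - ∫ k : ℕ, f ((k : ℝ) / t) ∂Po(t * x)|
      ≤ L / (γ + x) ^ β * (∫ k : ℕ, ‖(k : ℝ) / t - x‖ ^ (2 : ℝ) ∂Po(t * x)) ^ (α / 2) := by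
        rw [abs_sub_comm]
        exact norm_integral_sub_le_mul_rpow hX (by positivity) hα hα2 .of_discrete
          (ae_of_all _ hholder)
    _ = L / (γ + x) ^ β * (x / t) ^ (α / 2) := by
        simp only [Real.rpow_two, Real.norm_eq_abs, sq_abs]
        rw [integral_natCast_div_sub_sq_poissonMeasure (NNReal.coe_pos.1 ht).ne']
    _ = L / t ^ (α / 2) * x ^ (α / 2) / (γ + x) ^ β := by
        rw [Real.div_rpow x.coe_nonneg ht.le]
        ring

/-- Error bound for the Szász-Mirakjan operator for a function satisfying the general
Hölder-type condition: `|f(x) - S_n(f;x)| ≤ (L / n^(α/2)) · x^(α/2) / (γ + x)^β`. -/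
theorem szasz_mirakjan_general_holder
    (f : ℝ → ℝ) (L α β γ : ℝ) (hL : 0 < L) (hα : 0 < α) (hα1 : α ≤ 1)
    (hβ : 0 ≤ β) (hγ : 0 ≤ γ)
    (hf : ∀ y z : ℝ, 0 ≤ y → 0 ≤ z →
      |f y - f z| ≤ L * |y - z| ^ α / (γ + y + z) ^ β)
    (n : ℕ) (hn : 1 ≤ n) (x : ℝ) (hx : 0 < x) :
    |f x - ∑' (k : ℕ), f ((k : ℝ) / n) * (Real.exp (-(n * x)) * (n * x) ^ k / k.factorial)|
      ≤ L / (n : ℝ) ^ (α / 2) * x ^ (α / 2) / (γ + x) ^ β := by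
  obtain ⟨S, hS, hbound⟩ := szasz_mirakjan_general_holder_general hL.le hα.le (by linarith) hβ
    (Nat.cast_pos.2 hn) hx.le (by positivity) (hf x · hx.le)
  rwa [hS.tsum_eq]
end

section
/- Let f : [0,∞) → ℝ satisfy the general Hölder-type condition |f(x) − f(y)| ≤ L|x − y|^α/(γ + x + y)^β for all x, y ∈ [0,∞), with L > 0, α ∈ (0,1], γ ∈ [0,∞), and β > α/2. Then for all n ≥ 1 and all x ∈ (0,∞), the Szász-Mirakjan operator satisfies |f(x) − S_n(f;x)| ≤ (L/n^{α/2}) · (γ + x)^{α/2 − β}. -/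
/-!
`S_n(f; x)` is the average of `f (k / n)` when `k` is Poisson distributed with rate `n x`, so that
`k / n` has mean `x` and variance `x / n`. By Jensen's inequality for the concave function
`s ↦ s ^ (α / 2)`, the mean of `|x - k / n| ^ α` is at most `(x / n) ^ (α / 2)`. Since
`γ + x + k / n ≥ γ + x`, the Hölder-type condition at `x` bounds the error by
`L / (γ + x) ^ β * (x / n) ^ (α / 2)`, and `x ≤ γ + x` finishes.
-/

open scoped Nat

section WeightedSums

variable {ι : Type*} {w : ι → ℝ}

theorem rpow_le_rpow_mul_one_add_mul {s v p : ℝ} (hs : 0 ≤ s) (hv : 0 < v) (hp₀ : 0 ≤ p)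
    (hp₁ : p ≤ 1) : s ^ p ≤ v ^ p * (1 + p * (s / v - 1)) := by
  have hsv : 0 ≤ s / v := by positivity
  calc s ^ p = v ^ p * (1 + (s / v - 1)) ^ p := by
        rw [add_sub_cancel, ← Real.mul_rpow hv.le hsv, mul_div_cancel₀ _ hv.ne']
    _ ≤ v ^ p * (1 + p * (s / v - 1)) := by
        gcongr
        exact rpow_one_add_le_one_add_mul_self (by linarith) hp₀ hp₁

theorem summable_and_tsum_mul_rpow_le {s : ι → ℝ} {v p : ℝ} (hw : ∀ i, 0 ≤ w i)
    (hw₁ : HasSum w 1) (hs : ∀ i, 0 ≤ s i) (hws : HasSum (fun i => w i * s i) v) (hv : 0 < v)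
    (hp₀ : 0 ≤ p) (hp₁ : p ≤ 1) :
    Summable (fun i => w i * s i ^ p) ∧ ∑' i, w i * s i ^ p ≤ v ^ p := by
  have htangent : HasSum (fun i => w i * (v ^ p * (1 + p * (s i / v - 1)))) (v ^ p) := by
    convert! (hw₁.mul_left (v ^ p * (1 - p))).add (hws.mul_left (v ^ p * p / v)) using 1
    · funext i
      ring
    · field_simp
      ring
  have hle (i : ι) : w i * s i ^ p ≤ w i * (v ^ p * (1 + p * (s i / v - 1))) :=
    mul_le_mul_of_nonneg_left (rpow_le_rpow_mul_one_add_mul (hs i) hv hp₀ hp₁) (hw i)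
  have hsum : Summable fun i => w i * s i ^ p :=
    htangent.summable.of_nonneg_of_le (fun i => mul_nonneg (hw i) (Real.rpow_nonneg (hs i) p)) hle
  exact ⟨hsum, hasSum_le hle hsum.hasSum htangent⟩

theorem summable_and_tsum_mul_abs_rpow_le {d : ι → ℝ} {v α : ℝ} (hw : ∀ i, 0 ≤ w i)
    (hw₁ : HasSum w 1) (hwd : HasSum (fun i => w i * d i ^ 2) v) (hv : 0 < v) (hα₀ : 0 ≤ α)
    (hα₂ : α ≤ 2) :
    Summable (fun i => w i * |d i| ^ α) ∧ ∑' i, w i * |d i| ^ α ≤ v ^ (α / 2) := by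
  have habs (i : ι) : |d i| ^ α = (d i ^ 2) ^ (α / 2) := by
    rw [← sq_abs, ← Real.rpow_natCast_mul (abs_nonneg _), Nat.cast_ofNat,
      mul_div_cancel₀ α two_ne_zero]
  simp only [habs]
  exact summable_and_tsum_mul_rpow_le hw hw₁ (fun i => sq_nonneg (d i)) hwd hv (by linarith)
    (by linarith)

theorem norm_sub_tsum_smul_le {E : Type*} [NormedAddCommGroup E] [NormedSpace ℝ E]
    [CompleteSpace E] {a : E} {b : ι → E} {g : ι → ℝ} (hw : ∀ i, 0 ≤ w i) (hw₁ : HasSum w 1)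
    (hwg : Summable fun i => w i * g i) (hab : ∀ i, ‖a - b i‖ ≤ g i) :
    ‖a - ∑' i, w i • b i‖ ≤ ∑' i, w i * g i := by
  have hnorm (i : ι) : ‖w i • (a - b i)‖ ≤ w i * g i := by
    rw [norm_smul, Real.norm_of_nonneg (hw i)]
    exact mul_le_mul_of_nonneg_left (hab i) (hw i)
  have hdiff : Summable fun i => w i • (a - b i) := .of_norm_bounded hwg hnorm
  have hb : HasSum (fun i => w i • b i) (a - ∑' i, w i • (a - b i)) := by
    simpa only [smul_sub, sub_sub_cancel, one_smul] using (hw₁.smul_const a).sub hdiff.hasSum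
  rw [hb.tsum_eq, sub_sub_cancel]
  exact tsum_of_norm_bounded hwg.hasSum hnorm

end WeightedSums

/-- The mass at `k` of the Poisson distribution with rate `r`. The rate is a real number rather than
an `ℝ≥0`, as in `ProbabilityTheory.poissonMeasure`, because the moment identities below hold for
every real `r`. -/
noncomputable def poissonWeight (r : ℝ) (k : ℕ) : ℝ :=
  Real.exp (-r) * r ^ k / k !

theorem poissonWeight_nonneg {r : ℝ} (hr : 0 ≤ r) (k : ℕ) : 0 ≤ poissonWeight r k := by
  unfold poissonWeight
  positivity

theorem hasSum_poissonWeight (r : ℝ) : HasSum (poissonWeight r) 1 := by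
  have h := (NormedSpace.expSeries_div_hasSum_exp r).mul_left (Real.exp (-r))
  rw [← Real.exp_eq_exp_ℝ, ← Real.exp_add, neg_add_cancel, Real.exp_zero] at h
  exact h.congr_fun fun k => mul_div_assoc _ _ _

theorem poissonWeight_add_mul_descFactorial (r : ℝ) (k j : ℕ) :
    poissonWeight r (k + j) * (k + j).descFactorial j = r ^ j * poissonWeight r k := by
  have hfactorial : ((k + j)! : ℝ) = k ! * (k + j).descFactorial j := by
    exact_mod_cast (Nat.add_sub_cancel k j ▸
      Nat.factorial_mul_descFactorial (Nat.le_add_left j k)).symm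
  have hpos : ((k + j).descFactorial j : ℝ) ≠ 0 :=
    Nat.cast_ne_zero.2 (Nat.descFactorial_eq_zero_iff_lt.not.2 (by lia))
  rw [poissonWeight, poissonWeight, hfactorial]
  field_simp
  ring

theorem hasSum_poissonWeight_mul_descFactorial (r : ℝ) (j : ℕ) :
    HasSum (fun k => poissonWeight r k * k.descFactorial j) (r ^ j) := by
  have hinit : ∑ k ∈ Finset.range j, poissonWeight r k * k.descFactorial j = 0 :=
    Finset.sum_eq_zero fun k hk => by
      rw [Nat.descFactorial_of_lt (Finset.mem_range.1 hk), Nat.cast_zero, mul_zero]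
  rw [← hasSum_nat_add_iff' j, hinit, sub_zero]
  simpa only [poissonWeight_add_mul_descFactorial, mul_one] using
    (hasSum_poissonWeight r).mul_left (r ^ j)

theorem hasSum_poissonWeight_mul_sub_sq (r : ℝ) :
    HasSum (fun k => poissonWeight r k * (r - k) ^ 2) r := by
  have hmean := hasSum_poissonWeight_mul_descFactorial r 1
  have hfactorial := hasSum_poissonWeight_mul_descFactorial r 2
  simp only [Nat.descFactorial_one, Nat.cast_descFactorial_two] at hmean hfactorial
  convert! (hfactorial.add (hmean.mul_left (1 - 2 * r))).add
    ((hasSum_poissonWeight r).mul_left (r ^ 2)) using 1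
  · funext k
    ring
  · ring

theorem hasSum_poissonWeight_mul_sub_div_sq {t : ℝ} (ht : t ≠ 0) (x : ℝ) :
    HasSum (fun k => poissonWeight (t * x) k * (x - k / t) ^ 2) (x / t) := by
  convert! (hasSum_poissonWeight_mul_sub_sq (t * x)).div_const (t ^ 2) using 1
  · funext k
    field_simp
  · field_simp

section SzaszMirakjan

variable {E : Type*} [NormedAddCommGroup E] [NormedSpace ℝ E]

/-- The Szász-Mirakjan operator `S_t(f; x)` of a vector-valued function, with a real parameter `t`
in place of the integer `n`. It takes the junk value `0` where the series diverges. -/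
noncomputable def szaszMirakjan (t : ℝ) (f : ℝ → E) (x : ℝ) : E :=
  ∑' k : ℕ, poissonWeight (t * x) k • f (k / t)

variable [CompleteSpace E] {f : ℝ → E} {α t x : ℝ}

theorem norm_sub_szaszMirakjan_le {C : ℝ} (hC : 0 ≤ C) (hα₀ : 0 ≤ α) (hα₂ : α ≤ 2) (ht : 0 < t)
    (hx : 0 < x) (hf : ∀ y, 0 ≤ y → ‖f x - f y‖ ≤ C * |x - y| ^ α) :
    ‖f x - szaszMirakjan t f x‖ ≤ C * (x / t) ^ (α / 2) := by
  have hw := poissonWeight_nonneg (mul_pos ht hx).le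
  have hw₁ := hasSum_poissonWeight (t * x)
  obtain ⟨hsum, hmoment⟩ := summable_and_tsum_mul_abs_rpow_le hw hw₁
    (hasSum_poissonWeight_mul_sub_div_sq ht.ne' x) (div_pos hx ht) hα₀ hα₂
  have hCsum : Summable fun k : ℕ => poissonWeight (t * x) k * (C * |x - k / t| ^ α) := by
    simpa only [mul_left_comm] using hsum.mul_left C
  calc ‖f x - szaszMirakjan t f x‖
      ≤ ∑' k : ℕ, poissonWeight (t * x) k * (C * |x - k / t| ^ α) :=
        norm_sub_tsum_smul_le hw hw₁ hCsum fun k => hf _ (by positivity)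
    _ = C * ∑' k : ℕ, poissonWeight (t * x) k * |x - k / t| ^ α := by
        simp only [mul_left_comm _ C, tsum_mul_left]
    _ ≤ C * (x / t) ^ (α / 2) := mul_le_mul_of_nonneg_left hmoment hC

theorem szasz_mirakjan_decaying_bound_general {L β γ : ℝ} (hL : 0 ≤ L) (hα₀ : 0 ≤ α) (hα₂ : α ≤ 2)
    (hβ : 0 ≤ β) (hγ : 0 ≤ γ) (ht : 0 < t) (hx : 0 < x)
    (hf : ∀ y, 0 ≤ y → ‖f x - f y‖ ≤ L * |x - y| ^ α / (γ + x + y) ^ β) :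
    ‖f x - szaszMirakjan t f x‖ ≤ L / t ^ (α / 2) * (γ + x) ^ (α / 2 - β) := by
  have hγx : 0 < γ + x := by positivity
  have hholder (y : ℝ) (hy : 0 ≤ y) : ‖f x - f y‖ ≤ L / (γ + x) ^ β * |x - y| ^ α :=
    calc ‖f x - f y‖ ≤ L * |x - y| ^ α / (γ + x + y) ^ β := hf y hy
      _ ≤ L * |x - y| ^ α / (γ + x) ^ β := by
          gcongr _ / ?_ ^ β
          exact le_add_of_nonneg_right hy
      _ = L / (γ + x) ^ β * |x - y| ^ α := mul_div_right_comm _ _ _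
  calc ‖f x - szaszMirakjan t f x‖ ≤ L / (γ + x) ^ β * (x / t) ^ (α / 2) :=
        norm_sub_szaszMirakjan_le (by positivity) hα₀ hα₂ ht hx hholder
    _ ≤ L / (γ + x) ^ β * ((γ + x) / t) ^ (α / 2) := by
        gcongr
        exact le_add_of_nonneg_left hγ
    _ = L / t ^ (α / 2) * (γ + x) ^ (α / 2 - β) := by
        rw [Real.div_rpow hγx.le ht.le, Real.rpow_sub hγx]
        ring

end SzaszMirakjan

/-- Decaying error bound for the Szász-Mirakjan operator for a function satisfying the general
Hölder-type condition with `β > α/2`: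
`|f(x) - S_n(f;x)| ≤ (L / n^(α/2)) · (γ + x)^(α/2 - β)`. -/
theorem szasz_mirakjan_decaying_bound
    (f : ℝ → ℝ) (L α β γ : ℝ) (hL : 0 < L) (hα : 0 < α) (hα1 : α ≤ 1)
    (hβ : α / 2 < β) (hγ : 0 ≤ γ)
    (hf : ∀ y z : ℝ, 0 ≤ y → 0 ≤ z →
      |f y - f z| ≤ L * |y - z| ^ α / (γ + y + z) ^ β)
    (n : ℕ) (hn : 1 ≤ n) (x : ℝ) (hx : 0 < x) :
    |f x - ∑' (k : ℕ), f ((k : ℝ) / n) * (Real.exp (-(n * x)) * (n * x) ^ k / k.factorial)|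
      ≤ L / (n : ℝ) ^ (α / 2) * (γ + x) ^ (α / 2 - β) := by
  simpa only [szaszMirakjan, poissonWeight, smul_eq_mul, mul_comm (f _)] using!
    szasz_mirakjan_decaying_bound_general (f := f) (β := β) hL.le hα.le (by linarith)
      (by linarith) hγ (Nat.cast_pos.2 hn) hx fun y hy => hf x y hx.le hy
end

section
/- Let f : [0,∞) → ℝ satisfy the general Hölder-type condition |f(x) − f(y)| ≤ L|x − y|^α/(γ + x + y)^β for all x, y ∈ [0,∞), with L > 0, α ∈ (0,1], β, γ ∈ [0,∞). Then for all n ≥ 1 and all x ∈ (0,∞), the Baskakov operator satisfies |f(x) − S_n(f;x)| ≤ (L/n^{α/2}) · (x(x+1))^{α/2}/(γ + x)^β. -/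
/-!
The numbers `k / n`, weighted by the Pascal distribution, have mean `x` and variance
`x * (x + 1) / n`, so the `α`-th absolute moment of their deviation from `x` is at most
`(x * (x + 1) / n) ^ (α / 2)` by Lyapunov's inequality. As `γ + x + k / n ≥ γ + x`, the condition
on `f` bounds `|f x - f (k / n)|` by `L / (γ + x) ^ β` times the `α`-th power of that deviation.
The moments of the Pascal distribution follow from size-biasing: `k` times its weight with
parameter `n` is `n * x` times its weight with parameter `n + 1` at `k - 1`.
-/

section WeightedSums

variable {ι : Type*} {w d : ι → ℝ} {p q s v : ℝ}

lemma sum_mul_le_of_hasSum_mul_rpow (hp : 1 ≤ p) (hw : ∀ i, 0 ≤ w i) (hd : ∀ i, 0 ≤ d i)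
    (hs : HasSum w s) (hv : HasSum (fun i ↦ w i * d i ^ p) v) (t : Finset ι) :
    ∑ i ∈ t, w i * d i ≤ s ^ (1 - p⁻¹) * v ^ p⁻¹ := by
  have hwd (i : ι) : 0 ≤ w i * d i ^ p := mul_nonneg (hw i) (Real.rpow_nonneg (hd i) p)
  have hexponent : 0 ≤ 1 - p⁻¹ := sub_nonneg.2 (inv_le_one_of_one_le₀ hp)
  have hw_sum : 0 ≤ ∑ i ∈ t, w i := Finset.sum_nonneg fun i _ ↦ hw i
  have hwd_sum : 0 ≤ ∑ i ∈ t, w i * d i ^ p := Finset.sum_nonneg fun i _ ↦ hwd i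
  have hs_nonneg : 0 ≤ s := hs.nonneg hw
  calc ∑ i ∈ t, w i * d i
      ≤ (∑ i ∈ t, w i) ^ (1 - p⁻¹) * (∑ i ∈ t, w i * d i ^ p) ^ p⁻¹ :=
        Real.inner_le_weight_mul_Lp_of_nonneg t hp w d hw hd
    _ ≤ s ^ (1 - p⁻¹) * v ^ p⁻¹ := by
        gcongr
        · exact sum_le_hasSum t (fun i _ ↦ hw i) hs
        · exact sum_le_hasSum t (fun i _ ↦ hwd i) hv

lemma summable_mul_of_hasSum_mul_rpow (hp : 1 ≤ p) (hw : ∀ i, 0 ≤ w i) (hd : ∀ i, 0 ≤ d i)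
    (hs : HasSum w s) (hv : HasSum (fun i ↦ w i * d i ^ p) v) :
    Summable fun i ↦ w i * d i :=
  summable_of_sum_le (fun i ↦ mul_nonneg (hw i) (hd i))
    (sum_mul_le_of_hasSum_mul_rpow hp hw hd hs hv)

lemma tsum_mul_le_of_hasSum_mul_rpow (hp : 1 ≤ p) (hw : ∀ i, 0 ≤ w i) (hd : ∀ i, 0 ≤ d i)
    (hs : HasSum w s) (hv : HasSum (fun i ↦ w i * d i ^ p) v) :
    ∑' i, w i * d i ≤ s ^ (1 - p⁻¹) * v ^ p⁻¹ :=
  Real.tsum_le_of_sum_le (fun i ↦ mul_nonneg (hw i) (hd i))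
    (sum_mul_le_of_hasSum_mul_rpow hp hw hd hs hv)

variable {E : Type*} [NormedAddCommGroup E] [NormedSpace ℝ E] [CompleteSpace E]

lemma norm_sub_tsum_smul_le_s8 {g : ι → E} {c : E} {m : ℝ} (hw : ∀ i, 0 ≤ w i) (hs : HasSum w 1)
    (hm : HasSum (fun i ↦ w i * d i) m) (hg : ∀ i, ‖c - g i‖ ≤ d i) :
    ‖c - ∑' i, w i • g i‖ ≤ m := by
  have hbound (i : ι) : ‖w i • (c - g i)‖ ≤ w i * d i := by
    rw [norm_smul, Real.norm_of_nonneg (hw i)]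
    exact mul_le_mul_of_nonneg_left (hg i) (hw i)
  have hsub : Summable fun i ↦ w i • (c - g i) := hm.summable.of_norm_bounded hbound
  have hmean : HasSum (fun i ↦ w i • g i) (c - ∑' i, w i • (c - g i)) := by
    simpa only [one_smul, smul_sub, sub_sub_cancel] using (hs.smul_const c).sub hsub.hasSum
  rw [hmean.tsum_eq, sub_sub_cancel]
  exact tsum_of_norm_bounded hm hbound

lemma norm_sub_tsum_smul_le_rpow {g : ι → E} {c : E} {C α : ℝ} (hα : 0 < α) (hαq : α ≤ q)
    (hC : 0 ≤ C) (hw : ∀ i, 0 ≤ w i) (hd : ∀ i, 0 ≤ d i) (hs : HasSum w 1)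
    (hv : HasSum (fun i ↦ w i * d i ^ q) v) (hg : ∀ i, ‖c - g i‖ ≤ C * d i ^ α) :
    ‖c - ∑' i, w i • g i‖ ≤ C * v ^ (α / q) := by
  have hp : 1 ≤ q / α := (one_le_div₀ hα).2 hαq
  have hdα (i : ι) : 0 ≤ d i ^ α := Real.rpow_nonneg (hd i) α
  have hv' : HasSum (fun i ↦ w i * (d i ^ α) ^ (q / α)) v := by
    simpa only [← Real.rpow_mul (hd _), mul_div_cancel₀ q hα.ne'] using hv
  have hmoment : ∑' i, w i * d i ^ α ≤ v ^ (α / q) := by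
    simpa only [Real.one_rpow, one_mul, inv_div] using
      tsum_mul_le_of_hasSum_mul_rpow hp hw hdα hs hv'
  have hsum : HasSum (fun i ↦ w i * (C * d i ^ α)) (C * ∑' i, w i * d i ^ α) := by
    simpa only [mul_left_comm] using
      (summable_mul_of_hasSum_mul_rpow hp hw hdα hs hv').hasSum.mul_left C
  exact (norm_sub_tsum_smul_le_s8 hw hs hsum hg).trans (mul_le_mul_of_nonneg_left hmoment hC)

end WeightedSums

/-- The probability of `k` under the Pascal (negative binomial) distribution with mean `n * x`,
that is, of `k` failures before the `n`-th success when success has probability `1 / (1 + x)`. -/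
noncomputable def pascalWeight (n : ℕ) (x : ℝ) (k : ℕ) : ℝ :=
  ((n + k - 1).choose k : ℝ) * x ^ k / (1 + x) ^ (n + k)

section PascalMoments

variable {n : ℕ} {x : ℝ}

lemma pascalWeight_nonneg (n : ℕ) (hx : 0 ≤ x) (k : ℕ) : 0 ≤ pascalWeight n x k := by
  unfold pascalWeight
  positivity

lemma hasSum_pascalWeight (hn : n ≠ 0) (hx : 0 ≤ x) : HasSum (pascalWeight n x) 1 := by
  obtain ⟨m, rfl⟩ := Nat.exists_eq_succ_of_ne_zero hn
  have hratio : ‖x / (1 + x)‖ < 1 := by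
    rw [Real.norm_of_nonneg (by positivity), div_lt_one (by positivity)]
    linarith
  have hsub : 1 - x / (1 + x) = 1 / (1 + x) := by
    field_simp
    ring
  have hterm (k : ℕ) : 1 / (1 + x) ^ (m + 1) * (((k + m).choose m : ℝ) * (x / (1 + x)) ^ k) =
      pascalWeight (m + 1) x k := by
    rw [pascalWeight, show m + 1 + k - 1 = k + m by lia, Nat.choose_symm_add, div_pow, pow_add]
    field_simp
    ring
  have hgeom := (hasSum_choose_mul_geometric_of_norm_lt_one m hratio).mul_left
    (1 / (1 + x) ^ (m + 1))
  simp only [hterm, hsub, one_div_pow] at hgeom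
  rwa [mul_one_div_cancel (by positivity)] at hgeom

lemma pascalWeight_succ_mul_succ (n : ℕ) (x : ℝ) (k : ℕ) :
    pascalWeight n x (k + 1) * (k + 1) = n * x * pascalWeight (n + 1) x k := by
  have hchoose : ((n + k).choose (k + 1) : ℝ) * (k + 1) = (n + k).choose k * n := by
    exact_mod_cast (Nat.choose_succ_right_eq (n + k) k).trans (by rw [Nat.add_sub_cancel])
  rw [pascalWeight, pascalWeight, show n + (k + 1) - 1 = n + k by lia,
    show n + 1 + k - 1 = n + k by lia, show n + 1 + k = n + (k + 1) by lia]
  linear_combination x ^ (k + 1) / (1 + x) ^ (n + (k + 1)) * hchoose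

lemma hasSum_pascalWeight_mul_natCast_mul {g : ℕ → ℝ} {s : ℝ}
    (h : HasSum (fun k ↦ pascalWeight (n + 1) x k * g (k + 1)) s) :
    HasSum (fun k ↦ pascalWeight n x k * (k * g k)) (n * x * s) := by
  rw [← hasSum_nat_add_iff' 1]
  simpa only [Finset.sum_range_one, Nat.cast_zero, zero_mul, mul_zero, sub_zero, Nat.cast_succ,
    ← mul_assoc, pascalWeight_succ_mul_succ] using h.mul_left (n * x)

lemma hasSum_pascalWeight_mul_natCast (n : ℕ) (hx : 0 ≤ x) :
    HasSum (fun k ↦ pascalWeight n x k * k) (n * x) := by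
  have hmass : HasSum (fun k ↦ pascalWeight (n + 1) x k * 1) 1 := by
    simpa only [mul_one] using hasSum_pascalWeight n.succ_ne_zero hx
  simpa only [mul_one] using hasSum_pascalWeight_mul_natCast_mul (g := fun _ ↦ 1) hmass

lemma hasSum_pascalWeight_mul_natCast_sq (n : ℕ) (hx : 0 ≤ x) :
    HasSum (fun k ↦ pascalWeight n x k * k ^ 2) (n * x * ((n + 1) * x + 1)) := by
  have hmean : HasSum (fun k : ℕ ↦ pascalWeight (n + 1) x k * (k + 1 : ℕ)) ((n + 1) * x + 1) := by
    simpa only [Nat.cast_succ, mul_add, mul_one] using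
      (hasSum_pascalWeight_mul_natCast (n + 1) hx).add (hasSum_pascalWeight n.succ_ne_zero hx)
  simpa only [sq] using hasSum_pascalWeight_mul_natCast_mul (g := fun k ↦ (k : ℝ)) hmean

lemma hasSum_pascalWeight_mul_sub_sq (hn : n ≠ 0) (hx : 0 ≤ x) :
    HasSum (fun k ↦ pascalWeight n x k * (x - k / n) ^ 2) (x * (x + 1) / n) := by
  have hexpand := (((hasSum_pascalWeight_mul_natCast_sq n hx).div_const ((n : ℝ) ^ 2)).sub
    ((hasSum_pascalWeight_mul_natCast n hx).mul_left (2 * x / n))).add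
    ((hasSum_pascalWeight hn hx).mul_left (x ^ 2))
  convert! hexpand using 1
  · ext k
    ring
  · field_simp
    ring

end PascalMoments

section Baskakov

variable {E : Type*} [NormedAddCommGroup E] [NormedSpace ℝ E]

/-- The Baskakov operator `S_n(f; x)`, for functions `f` with values in a real normed space. Only
the values of `f` on `[0, ∞)` enter, and the value is `0` where the series does not converge
unconditionally. -/
noncomputable def baskakov (n : ℕ) (f : ℝ → E) (x : ℝ) : E :=
  ∑' k : ℕ, pascalWeight n x k • f (k / n)

variable [CompleteSpace E]

lemma norm_sub_baskakov_le {f : ℝ → E} {C α x : ℝ} {n : ℕ} (hn : n ≠ 0) (hx : 0 ≤ x) (hα : 0 < α)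
    (hα2 : α ≤ 2) (hC : 0 ≤ C) (hf : ∀ z, 0 ≤ z → ‖f x - f z‖ ≤ C * |x - z| ^ α) :
    ‖f x - baskakov n f x‖ ≤ C * (x * (x + 1) / n) ^ (α / 2) := by
  have hvariance : HasSum (fun k : ℕ ↦ pascalWeight n x k * |x - k / n| ^ (2 : ℝ))
      (x * (x + 1) / n) := by
    simpa only [Real.rpow_two, sq_abs] using hasSum_pascalWeight_mul_sub_sq hn hx
  exact norm_sub_tsum_smul_le_rpow hα hα2 hC (pascalWeight_nonneg n hx) (fun _ ↦ abs_nonneg _)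
    (hasSum_pascalWeight hn hx) hvariance fun k ↦ hf _ (by positivity)

theorem baskakov_general_holder_general {f : ℝ → E} {L α β γ x : ℝ} {n : ℕ} (hL : 0 ≤ L)
    (hα : 0 < α) (hα2 : α ≤ 2) (hβ : 0 ≤ β) (hn : n ≠ 0) (hx : 0 ≤ x) (hγx : 0 < γ + x)
    (hf : ∀ z, 0 ≤ z → ‖f x - f z‖ ≤ L * |x - z| ^ α / (γ + x + z) ^ β) :
    ‖f x - baskakov n f x‖ ≤ L / (n : ℝ) ^ (α / 2) * (x * (x + 1)) ^ (α / 2) / (γ + x) ^ β := by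
  have hholder (z : ℝ) (hz : 0 ≤ z) : ‖f x - f z‖ ≤ L / (γ + x) ^ β * |x - z| ^ α :=
    calc ‖f x - f z‖ ≤ L * |x - z| ^ α / (γ + x + z) ^ β := hf z hz
      _ ≤ L * |x - z| ^ α / (γ + x) ^ β := by
        have hdenom : γ + x ≤ γ + x + z := le_add_of_nonneg_right hz
        gcongr
      _ = L / (γ + x) ^ β * |x - z| ^ α := by ring
  calc ‖f x - baskakov n f x‖ ≤ L / (γ + x) ^ β * (x * (x + 1) / n) ^ (α / 2) :=
        norm_sub_baskakov_le hn hx hα hα2 (by positivity) hholder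
    _ = L / (n : ℝ) ^ (α / 2) * (x * (x + 1)) ^ (α / 2) / (γ + x) ^ β := by
        rw [Real.div_rpow (by positivity) (by positivity)]
        ring

end Baskakov

/-- Error bound for the Baskakov operator for a function satisfying the general Hölder-type
condition: `|f(x) - S_n(f;x)| ≤ (L / n^(α/2)) · (x(x+1))^(α/2) / (γ + x)^β`. -/
theorem baskakov_general_holder
    (f : ℝ → ℝ) (L α β γ : ℝ) (hL : 0 < L) (hα : 0 < α) (hα1 : α ≤ 1)
    (hβ : 0 ≤ β) (hγ : 0 ≤ γ)
    (hf : ∀ y z : ℝ, 0 ≤ y → 0 ≤ z →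
      |f y - f z| ≤ L * |y - z| ^ α / (γ + y + z) ^ β)
    (n : ℕ) (hn : 1 ≤ n) (x : ℝ) (hx : 0 < x) :
    |f x - ∑' (k : ℕ), f ((k : ℝ) / n) *
        (((n + k - 1).choose k : ℝ) * x ^ k / (1 + x) ^ (n + k))|
      ≤ L / (n : ℝ) ^ (α / 2) * (x * (x + 1)) ^ (α / 2) / (γ + x) ^ β := by
  simp_rw [mul_comm (f _)]
  exact baskakov_general_holder_general (f := f) hL.le hα (by linarith) hβ
    (Nat.one_le_iff_ne_zero.1 hn) hx.le (by positivity) fun z ↦ hf x z hx.le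
end

section
/- Let f : [0,∞) → ℝ satisfy |f(x) − f(y)| ≤ L|x − y|^α/(x + y)^{α/2} for all x, y ∈ [0,∞), with L > 0 and α ∈ (0,1] (the general Hölder-type condition with γ = 0 and β = α/2). Then for all n ≥ 1 and all x ∈ (0,∞), the Baskakov operator satisfies |f(x) − S_n(f;x)| ≤ L · ((x+1)/n)^{α/2}. -/
/-!
The Baskakov basis functions `b n k` are a probability distribution in `k` (negative binomial).
The recurrence `(n + k) * b n k x = n * (1 + x) * b (n + 1) k x` turns every rising factorial moment
into a total mass, so the second central moment of the nodes `k / n` is `x * (1 + x) / n`. Hölder's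
inequality bounds the absolute moment of order `α ≤ 2` by the power `α / 2` of this variance.
Finally `x + y ≥ x` makes `f` Hölder at `x` with constant `L / x ^ (α / 2)`, and this factor
cancels the `x` in the variance.
-/

section WeightedSums

variable {ι : Type*} {w : ι → ℝ}

theorem summable_and_weighted_inner_le_tsum_of_nonneg {g : ι → ℝ} {p : ℝ} (hp : 1 ≤ p)
    (hw : ∀ i, 0 ≤ w i) (hg : ∀ i, 0 ≤ g i) (hw_sum : Summable w)
    (hg_sum : Summable fun i => w i * g i ^ p) :
    (Summable fun i => w i * g i) ∧
      ∑' i, w i * g i ≤ (∑' i, w i) ^ (1 - p⁻¹) * (∑' i, w i * g i ^ p) ^ p⁻¹ := by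
  have hwg : ∀ i, 0 ≤ w i * g i := fun i => mul_nonneg (hw i) (hg i)
  have hwgp : ∀ i, 0 ≤ w i * g i ^ p := fun i => mul_nonneg (hw i) (Real.rpow_nonneg (hg i) p)
  have hp_inv : 0 ≤ 1 - p⁻¹ := sub_nonneg.mpr (inv_le_one_of_one_le₀ hp)
  have partial_sum_le (s : Finset ι) :
      ∑ i ∈ s, w i * g i ≤ (∑' i, w i) ^ (1 - p⁻¹) * (∑' i, w i * g i ^ p) ^ p⁻¹ := by
    refine (Real.inner_le_weight_mul_Lp_of_nonneg s hp w g hw hg).trans ?_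
    have hws : 0 ≤ ∑ i ∈ s, w i := Finset.sum_nonneg fun i _ => hw i
    have hwgs : 0 ≤ ∑ i ∈ s, w i * g i ^ p := Finset.sum_nonneg fun i _ => hwgp i
    have hwt : 0 ≤ ∑' i, w i := tsum_nonneg hw
    gcongr
    · exact hw_sum.sum_le_tsum s fun i _ => hw i
    · exact hg_sum.sum_le_tsum s fun i _ => hwgp i
  exact ⟨summable_of_sum_le hwg partial_sum_le, Real.tsum_le_of_sum_le hwg partial_sum_le⟩

theorem abs_sub_tsum_mul_le_tsum {F b : ι → ℝ} {a : ℝ} (hw : ∀ i, 0 ≤ w i) (hw_one : HasSum w 1)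
    (hFb : ∀ i, |a - F i| ≤ b i) (hb_sum : Summable fun i => b i * w i) :
    |a - ∑' i, F i * w i| ≤ ∑' i, b i * w i := by
  have hterm (i : ι) : ‖(a - F i) * w i‖ ≤ b i * w i := by
    rw [norm_mul, Real.norm_eq_abs, Real.norm_of_nonneg (hw i)]
    exact mul_le_mul_of_nonneg_right (hFb i) (hw i)
  have hdiff_sum : Summable fun i => (a - F i) * w i := .of_norm_bounded hb_sum hterm
  have hF : HasSum (fun i => F i * w i) (a - ∑' i, (a - F i) * w i) := by
    simpa only [sub_mul, sub_sub_cancel, mul_one] using (hw_one.mul_left a).sub hdiff_sum.hasSum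
  rw [hF.tsum_eq, sub_sub_cancel]
  exact tsum_of_norm_bounded hb_sum.hasSum hterm

end WeightedSums

/-- The Baskakov basis function `C(n+k-1, k) x^k / (1+x)^(n+k)`, the weight of the node `k / n`.
For `n = k = 0` the truncated subtraction gives the value `1`. -/
noncomputable def baskakovBasis (n k : ℕ) (x : ℝ) : ℝ :=
  ((n + k - 1).choose k : ℝ) * x ^ k / (1 + x) ^ (n + k)

/-- The Baskakov operator `S_n(f; x)`. The series is a `tsum`, hence `0` where it diverges. -/
noncomputable def baskakovOperator (n : ℕ) (f : ℝ → ℝ) (x : ℝ) : ℝ :=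
  ∑' k : ℕ, f ((k : ℝ) / n) * baskakovBasis n k x

section Moments

variable {n : ℕ} {x : ℝ}

theorem baskakovBasis_nonneg (n k : ℕ) (hx : 0 ≤ x) : 0 ≤ baskakovBasis n k x := by
  unfold baskakovBasis
  positivity

theorem hasSum_baskakovBasis (hn : n ≠ 0) (hx : 0 ≤ x) :
    HasSum (fun k => baskakovBasis n k x) 1 := by
  obtain ⟨m, rfl⟩ := Nat.exists_eq_succ_of_ne_zero hn
  have hx1 : 0 < 1 + x := by linarith
  have hratio : ‖x / (1 + x)‖ < 1 := by
    rw [Real.norm_of_nonneg (by positivity), div_lt_one hx1]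
    linarith
  have hsub : 1 - x / (1 + x) = (1 + x)⁻¹ := by
    field_simp
    ring
  have hgeom := (hasSum_choose_mul_geometric_of_norm_lt_one m hratio).div_const ((1 + x) ^ (m + 1))
  rw [hsub, inv_pow, one_div, inv_inv, div_self (by positivity)] at hgeom
  refine hgeom.congr_fun fun k => ?_
  have hchoose : (m + 1 + k - 1).choose k = (k + m).choose m := by
    rw [show m + 1 + k - 1 = k + m by omega, Nat.choose_symm_add]
  rw [baskakovBasis, Nat.succ_eq_add_one, hchoose, div_pow, pow_add]
  field_simp

theorem add_mul_choose_add_sub_one (n k : ℕ) :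
    (n + k) * (n + k - 1).choose k = n * (n + k).choose k := by
  cases n with
  | zero => cases k <;> simp
  | succ m =>
    have h := Nat.choose_mul_succ_eq (m + k) k
    rw [show m + k + 1 - k = m + 1 by omega] at h
    rw [show m + 1 + k = m + k + 1 by omega, Nat.add_sub_cancel]
    linarith

theorem add_mul_baskakovBasis (n k : ℕ) (hx : 1 + x ≠ 0) :
    (n + k) * baskakovBasis n k x = n * (1 + x) * baskakovBasis (n + 1) k x := by
  have hchoose : ((n : ℝ) + k) * ((n + k - 1).choose k : ℝ) = n * ((n + k).choose k : ℝ) := by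
    exact_mod_cast add_mul_choose_add_sub_one n k
  rw [baskakovBasis, baskakovBasis, show n + 1 + k = n + k + 1 by omega, Nat.add_sub_cancel,
    pow_succ]
  field_simp
  linear_combination x ^ k * hchoose

theorem hasSum_ascFactorial_mul_baskakovBasis (hn : n ≠ 0) (hx : 0 ≤ x) (j : ℕ) :
    HasSum (fun k => ((n + k).ascFactorial j : ℝ) * baskakovBasis n k x)
      (n.ascFactorial j * (1 + x) ^ j) := by
  induction j generalizing n with
  | zero => simpa using hasSum_baskakovBasis hn hx
  | succ j ih =>
    have hasc (i : ℕ) : (i.ascFactorial (j + 1) : ℝ) = i * (i + 1).ascFactorial j := by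
      exact_mod_cast i.ascFactorial_succ.trans (i.succ_ascFactorial j).symm
    convert! (ih n.succ_ne_zero).mul_left (n * (1 + x)) using 1
    · funext k
      have hrec := add_mul_baskakovBasis n k (x := x) (by positivity)
      rw [hasc, show n + k + 1 = n + 1 + k by omega]
      push_cast
      linear_combination ((n + 1 + k).ascFactorial j : ℝ) * hrec
    · rw [hasc]
      ring

theorem hasSum_baskakovBasis_mul_sq (hn : n ≠ 0) (hx : 0 ≤ x) :
    HasSum (fun k : ℕ => baskakovBasis n k x * (x - (k : ℝ) / n) ^ 2) (x * (1 + x) / n) := by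
  have moment := hasSum_ascFactorial_mul_baskakovBasis hn hx
  -- With `a = n * (1 + x)` and `i = n + k`:
  -- `(n * x - k) ^ 2 = (a - i) ^ 2 = i * (i + 1) - (2 * a + 1) * i + a ^ 2`.
  convert! (((moment 2).sub ((moment 1).mul_left (2 * (n * (1 + x)) + 1))).add
    ((moment 0).mul_left ((n * (1 + x)) ^ 2))).div_const ((n : ℝ) ^ 2) using 1
  · funext k
    simp only [Nat.ascFactorial]
    push_cast
    field_simp
    ring
  · simp only [Nat.ascFactorial]
    push_cast
    field_simp
    ring

theorem summable_and_tsum_baskakovBasis_mul_abs_rpow_le {α : ℝ} (hα : 0 < α) (hα2 : α ≤ 2)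
    (hn : n ≠ 0) (hx : 0 ≤ x) :
    (Summable fun k : ℕ => baskakovBasis n k x * |x - (k : ℝ) / n| ^ α) ∧
      ∑' k : ℕ, baskakovBasis n k x * |x - (k : ℝ) / n| ^ α ≤ (x * (1 + x) / n) ^ (α / 2) := by
  have hmass := hasSum_baskakovBasis hn hx
  have hvar := hasSum_baskakovBasis_mul_sq hn hx
  have hpow (k : ℕ) : (|x - (k : ℝ) / n| ^ α) ^ (2 / α) = (x - (k : ℝ) / n) ^ 2 := by
    rw [← Real.rpow_mul (abs_nonneg _), mul_div_cancel₀ _ hα.ne', Real.rpow_two, sq_abs]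
  have holder := summable_and_weighted_inner_le_tsum_of_nonneg (p := 2 / α)
    (g := fun k : ℕ => |x - (k : ℝ) / n| ^ α) ((one_le_div₀ hα).mpr hα2)
    (fun k => baskakovBasis_nonneg n k hx) (fun k => Real.rpow_nonneg (abs_nonneg _) α)
    hmass.summable (by simpa only [hpow] using hvar.summable)
  simpa only [hpow, hmass.tsum_eq, hvar.tsum_eq, Real.one_rpow, one_mul, inv_div] using holder

end Moments

theorem abs_sub_baskakovOperator_le_of_holder_at {f : ℝ → ℝ} {M α x : ℝ} (hM : 0 ≤ M)
    (hα : 0 < α) (hα2 : α ≤ 2) (hx : 0 ≤ x) (hf : ∀ y, 0 ≤ y → |f x - f y| ≤ M * |x - y| ^ α)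
    {n : ℕ} (hn : n ≠ 0) :
    |f x - baskakovOperator n f x| ≤ M * (x * (1 + x) / n) ^ (α / 2) := by
  obtain ⟨hsum, hle⟩ := summable_and_tsum_baskakovBasis_mul_abs_rpow_le hα hα2 hn hx
  have hassoc (k : ℕ) : M * |x - (k : ℝ) / n| ^ α * baskakovBasis n k x =
      M * (baskakovBasis n k x * |x - (k : ℝ) / n| ^ α) := by ring
  calc |f x - baskakovOperator n f x|
      ≤ ∑' k : ℕ, M * |x - (k : ℝ) / n| ^ α * baskakovBasis n k x :=
        abs_sub_tsum_mul_le_tsum (fun k => baskakovBasis_nonneg n k hx)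
          (hasSum_baskakovBasis hn hx) (fun k => hf _ (by positivity))
          (by simpa only [hassoc] using hsum.mul_left M)
    _ = M * ∑' k : ℕ, baskakovBasis n k x * |x - (k : ℝ) / n| ^ α := by
        simp only [hassoc, tsum_mul_left]
    _ ≤ M * (x * (1 + x) / n) ^ (α / 2) := by gcongr

theorem baskakov_gamma_zero_bound_general {f : ℝ → ℝ} {L α x : ℝ} (hL : 0 ≤ L) (hα : 0 < α)
    (hα2 : α ≤ 2) (hx : 0 < x)
    (hf : ∀ y, 0 ≤ y → |f x - f y| ≤ L * |x - y| ^ α / (x + y) ^ (α / 2)) {n : ℕ} (hn : n ≠ 0) :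
    |f x - baskakovOperator n f x| ≤ L * ((x + 1) / n) ^ (α / 2) := by
  have holder_at (y : ℝ) (hy : 0 ≤ y) : |f x - f y| ≤ L / x ^ (α / 2) * |x - y| ^ α :=
    calc |f x - f y| ≤ L * |x - y| ^ α / (x + y) ^ (α / 2) := hf y hy
      _ ≤ L * |x - y| ^ α / x ^ (α / 2) := by
        gcongr
        linarith
      _ = L / x ^ (α / 2) * |x - y| ^ α := by ring
  calc |f x - baskakovOperator n f x|
      ≤ L / x ^ (α / 2) * (x * (1 + x) / n) ^ (α / 2) :=
        abs_sub_baskakovOperator_le_of_holder_at (by positivity) hα hα2 hx.le holder_at hn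
    _ = L * ((x + 1) / n) ^ (α / 2) := by
      rw [mul_div_assoc, Real.mul_rpow hx.le (by positivity), add_comm 1 x]
      field_simp

/-- Error bound for the Baskakov operator for a function satisfying the general Hölder-type
condition with `γ = 0` and `β = α/2`: `|f(x) - S_n(f;x)| ≤ L · ((x+1)/n)^(α/2)`. -/
theorem baskakov_gamma_zero_bound
    (f : ℝ → ℝ) (L α : ℝ) (hL : 0 < L) (hα : 0 < α) (hα1 : α ≤ 1)
    (hf : ∀ y z : ℝ, 0 ≤ y → 0 ≤ z →
      |f y - f z| ≤ L * |y - z| ^ α / (y + z) ^ (α / 2))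
    (n : ℕ) (hn : 1 ≤ n) (x : ℝ) (hx : 0 < x) :
    |f x - ∑' (k : ℕ), f ((k : ℝ) / n) *
        (((n + k - 1).choose k : ℝ) * x ^ k / (1 + x) ^ (n + k))|
      ≤ L * ((x + 1) / n) ^ (α / 2) :=
  baskakov_gamma_zero_bound_general hL.le hα (hα1.trans one_le_two) hx
    (fun y hy => hf x y hx.le hy) (Nat.one_le_iff_ne_zero.mp hn)
end
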